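/- Let G be a group, and let π : G → U(H) and ρ : G → U(K) be unitary representations. Suppose T : K → H is a nonzero Hilbert–Schmidt operator intertwining ρ and π, i.e. π(g) T = T ρ(g) for all g ∈ G. Then π and ρ admit a common nonzero finite-dimensional subrepresentation: there exist a nonzero finite-dimensional π-invariant subspace E ⊆ H and a ρ-invariant subspace F ⊆ K such that π restricted to E is unitarily equivalent to ρ restricted to F. -/

import Mathlib

/-!
A Hilbert–Schmidt operator `T` is the norm limit of its partial expansions `∑ ⟪b j, ·⟫ • T (b j)`,
hence compact. If `T ≠ 0`, the spectral theorem gives the compact positive operator `T† T` a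
nonzero eigenvalue `σ ^ 2`, with finite-dimensional eigenspace `F`, and `‖T x‖ = σ * ‖x‖` on `F`.
Taking adjoints in `π(g) T = T ρ(g)` and using unitarity gives `ρ(g) T† = T† π(g)`, so `T† T`
commutes with `ρ`. Hence `F` is `ρ`-invariant, and `σ⁻¹ • T` maps it isometrically and
equivariantly onto a `π`-invariant subspace of `H`.
-/

open ContinuousLinearMap InnerProductSpace

section HilbertSchmidt

variable {𝕜 X Y κ : Type*} [RCLike 𝕜] [NormedAddCommGroup X] [InnerProductSpace 𝕜 X]
  [NormedAddCommGroup Y] [NormedSpace 𝕜 Y]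

theorem isCompactOperator_rankOne (y : Y) (x : X) : IsCompactOperator (rankOne 𝕜 y x) :=
  (isCompactOperator_of_locallyCompactSpace_dom (innerSL 𝕜 x)).clm_comp (toSpanSingleton 𝕜 y)

theorem norm_sum_rankOne_le_of_orthonormal {v : κ → X} (hv : Orthonormal 𝕜 v) (w : κ → Y)
    (t : Finset κ) : ‖∑ j ∈ t, rankOne 𝕜 (w j) (v j)‖ ≤ √(∑ j ∈ t, ‖w j‖ ^ 2) := by
  refine opNorm_le_bound _ (Real.sqrt_nonneg _) fun x => ?_
  have bessel : √(∑ j ∈ t, ‖inner 𝕜 (v j) x‖ ^ 2) ≤ ‖x‖ :=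
    (Real.sqrt_le_left (norm_nonneg x)).mpr (hv.sum_inner_products_le x)
  calc ‖(∑ j ∈ t, rankOne 𝕜 (w j) (v j)) x‖
      = ‖∑ j ∈ t, inner 𝕜 (v j) x • w j‖ := by simp
    _ ≤ ∑ j ∈ t, ‖w j‖ * ‖inner 𝕜 (v j) x‖ :=
        norm_sum_le_of_le _ fun j _ => by rw [norm_smul, mul_comm]
    _ ≤ √(∑ j ∈ t, ‖w j‖ ^ 2) * √(∑ j ∈ t, ‖inner 𝕜 (v j) x‖ ^ 2) :=
        Real.sum_mul_le_sqrt_mul_sqrt _ _ _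
    _ ≤ √(∑ j ∈ t, ‖w j‖ ^ 2) * ‖x‖ := by gcongr

theorem summable_rankOne_of_orthonormal [CompleteSpace Y] {v : κ → X} (hv : Orthonormal 𝕜 v)
    {w : κ → Y} (hw : Summable fun j => ‖w j‖ ^ 2) :
    Summable fun j => rankOne 𝕜 (w j) (v j) := by
  rw [summable_iff_vanishing_norm] at hw ⊢
  intro ε hε
  obtain ⟨s, hs⟩ := hw (ε ^ 2) (by positivity)
  refine ⟨s, fun t hts => (norm_sum_rankOne_le_of_orthonormal hv w t).trans_lt ?_⟩
  exact (Real.sqrt_lt' hε).mpr ((le_abs_self _).trans_lt (hs t hts))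

theorem hasSum_rankOne_of_hilbertBasis [CompleteSpace Y] (b : HilbertBasis κ 𝕜 X) {T : X →L[𝕜] Y}
    (hT : Summable fun j => ‖T (b j)‖ ^ 2) : HasSum (fun j => rankOne 𝕜 (T (b j)) (b j)) T := by
  have hs := summable_rankOne_of_orthonormal b.orthonormal hT
  convert hs.hasSum
  ext x
  have expansion : HasSum (fun j => rankOne 𝕜 (T (b j)) (b j) x) (T x) := by
    simpa [HilbertBasis.repr_apply_apply] using (b.hasSum_repr x).mapL T
  exact expansion.unique (hs.hasSum.mapL (ContinuousLinearMap.apply 𝕜 Y x))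

theorem isCompactOperator_of_summable_norm_sq [CompleteSpace Y] (b : HilbertBasis κ 𝕜 X)
    {T : X →L[𝕜] Y} (hT : Summable fun j => ‖T (b j)‖ ^ 2) : IsCompactOperator T :=
  isCompactOperator_of_tendsto (hasSum_rankOne_of_hilbertBasis b hT) <| .of_forall fun s =>
    (compactOperator (RingHom.id 𝕜) X Y).sum_mem (t := s) fun j _ =>
      isCompactOperator_rankOne (T (b j)) (b j)

end HilbertSchmidt

section SingularSubspace

variable {𝕜 H K : Type*} [RCLike 𝕜]
  [NormedAddCommGroup H] [InnerProductSpace 𝕜 H] [CompleteSpace H]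
  [NormedAddCommGroup K] [InnerProductSpace 𝕜 K] [CompleteSpace K]
  {T : K →L[𝕜] H} {σ : ℝ}

/-- The right singular subspace of `T` for the singular value `σ`: the eigenspace of `T† T` for
`σ ^ 2`. It is indexed by `σ` so that `T` scales norms on it by `σ` when `0 ≤ σ`. -/
noncomputable def singularSubspace (T : K →L[𝕜] H) (σ : ℝ) : Submodule 𝕜 K :=
  Module.End.eigenspace (adjoint T ∘L T : K →L[𝕜] K).toLinearMap ((σ ^ 2 : ℝ) : 𝕜)

theorem mem_singularSubspace_iff {x : K} :
    x ∈ singularSubspace T σ ↔ (adjoint T ∘L T) x = ((σ ^ 2 : ℝ) : 𝕜) • x :=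
  Module.End.mem_eigenspace_iff

theorem norm_apply_of_mem_singularSubspace (hσ : 0 ≤ σ) {x : K} (hx : x ∈ singularSubspace T σ) :
    ‖T x‖ = σ * ‖x‖ := by
  refine (sq_eq_sq₀ (norm_nonneg _) (by positivity)).mp ?_
  rw [apply_norm_sq_eq_inner_adjoint_left, mem_singularSubspace_iff.mp hx, inner_smul_real_left,
    RCLike.smul_re, inner_self_eq_norm_sq, mul_pow]

theorem finiteDimensional_singularSubspace (hT : IsCompactOperator T) (hσ : σ ≠ 0) :
    FiniteDimensional 𝕜 (singularSubspace T σ) :=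
  finite_dimensional_eigenspace (hT.clm_comp (adjoint T)) _
    (RCLike.ofReal_ne_zero.mpr (pow_ne_zero 2 hσ))

theorem exists_pos_singularSubspace_ne_bot (hT : IsCompactOperator T) (hT0 : T ≠ 0) :
    ∃ σ : ℝ, 0 < σ ∧ singularSubspace T σ ≠ ⊥ := by
  have hpos : (adjoint T ∘L T).IsPositive := isPositive_adjoint_comp_self T
  obtain ⟨μ, hμ, hμ0⟩ : ∃ μ : 𝕜,
      Module.End.HasEigenvalue (adjoint T ∘L T : K →L[𝕜] K).toLinearMap μ ∧ μ ≠ 0 := by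
    by_contra! h
    exact hT0 (adjoint_comp_self_eq_zero_iff.mp
      ((eq_zero_of_forall_hasEigenvalue_eq_zero (hT.clm_comp (adjoint T)) hpos.isSymmetric).mp h))
  obtain ⟨r, rfl⟩ : ∃ r : ℝ, (r : 𝕜) = μ :=
    RCLike.conj_eq_iff_real.mp (hpos.isSymmetric.conj_eigenvalue_eq_self hμ) |>.imp fun _ => Eq.symm
  have hr : 0 < r := (eigenvalue_nonneg_of_nonneg hμ hpos.re_inner_nonneg_right).lt_of_ne'
    (RCLike.ofReal_ne_zero.mp hμ0)
  refine ⟨√r, Real.sqrt_pos.mpr hr, ?_⟩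
  rwa [singularSubspace, Real.sq_sqrt hr.le]

/-- The isometry `σ⁻¹ • T` from the right singular subspace of `T` for `σ` into the codomain; its
range is the corresponding left singular subspace. -/
noncomputable def singularIsometry (T : K →L[𝕜] H) (hσ : 0 < σ) :
    singularSubspace T σ →ₗᵢ[𝕜] H where
  toLinearMap := ((σ⁻¹ : ℝ) : 𝕜) • T.toLinearMap.domRestrict (singularSubspace T σ)
  norm_map' x := by
    simp [norm_smul, norm_apply_of_mem_singularSubspace hσ.le x.2, abs_of_pos hσ, hσ.ne']

theorem singularIsometry_apply (hσ : 0 < σ) (x : singularSubspace T σ) :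
    singularIsometry T hσ x = ((σ⁻¹ : ℝ) : 𝕜) • T x :=
  rfl

theorem singularIsometry_intertwines (hσ : 0 < σ) {A : H →L[𝕜] H} {B : K →L[𝕜] K}
    (h : A ∘L T = T ∘L B) (x y : singularSubspace T σ) (hxy : B x = y) :
    A (singularIsometry T hσ x) = singularIsometry T hσ y := by
  have hx : A (T x) = T (B x) := congr($h x)
  rw [singularIsometry_apply, singularIsometry_apply, map_smul, hx, hxy]

theorem unitary_comp_adjoint_eq {U : unitary (H →L[𝕜] H)} {V : unitary (K →L[𝕜] K)}
    (h : (U : H →L[𝕜] H) ∘L T = T ∘L (V : K →L[𝕜] K)) :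
    (V : K →L[𝕜] K) ∘L adjoint T = adjoint T ∘L (U : H →L[𝕜] H) := by
  have hV : (V : K →L[𝕜] K) ∘L adjoint (V : K →L[𝕜] K) = .id 𝕜 K := Unitary.coe_mul_star_self V
  have hU : adjoint (U : H →L[𝕜] H) ∘L (U : H →L[𝕜] H) = .id 𝕜 H := Unitary.coe_star_mul_self U
  have hadj : adjoint T ∘L adjoint (U : H →L[𝕜] H) = adjoint (V : K →L[𝕜] K) ∘L adjoint T := by
    simpa only [adjoint_comp] using congr(adjoint $h)
  calc (V : K →L[𝕜] K) ∘L adjoint T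
      = V ∘L (adjoint T ∘L adjoint (U : H →L[𝕜] H)) ∘L U := by
        rw [comp_assoc, hU, comp_id]
    _ = (V ∘L adjoint (V : K →L[𝕜] K)) ∘L adjoint T ∘L U := by
        rw [hadj]; simp only [comp_assoc]
    _ = adjoint T ∘L U := by rw [hV, id_comp]

theorem unitary_apply_mem_singularSubspace {U : unitary (H →L[𝕜] H)} {V : unitary (K →L[𝕜] K)}
    (h : (U : H →L[𝕜] H) ∘L T = T ∘L (V : K →L[𝕜] K)) {x : K} (hx : x ∈ singularSubspace T σ) :
    (V : K →L[𝕜] K) x ∈ singularSubspace T σ := by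
  rw [mem_singularSubspace_iff] at hx ⊢
  calc (adjoint T ∘L T) ((V : K →L[𝕜] K) x)
      = adjoint T ((U : H →L[𝕜] H) (T x)) := congr(adjoint T ($h x)).symm
    _ = (V : K →L[𝕜] K) ((adjoint T ∘L T) x) := congr($(unitary_comp_adjoint_eq h) (T x)).symm
    _ = ((σ ^ 2 : ℝ) : 𝕜) • (V : K →L[𝕜] K) x := by rw [hx, map_smul]

end SingularSubspace

section EquivRange

variable {𝕜 H K : Type*} [Ring 𝕜] [NormedAddCommGroup H] [Module 𝕜 H]
  [NormedAddCommGroup K] [Module 𝕜 K] {F : Submodule 𝕜 K} {e : F →ₗᵢ[𝕜] H} {A : H → H} {B : K → K}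

theorem apply_mem_range_of_intertwines (hB : ∀ y ∈ F, B y ∈ F)
    (he : ∀ x y : F, B x = y → A (e x) = e y) {x : H} (hx : x ∈ e.toLinearMap.range) :
    A x ∈ e.toLinearMap.range := by
  obtain ⟨u, rfl⟩ := hx
  exact ⟨⟨B u, hB u u.2⟩, (he u _ rfl).symm⟩

theorem equivRange_symm_intertwines (hB : ∀ y ∈ F, B y ∈ F)
    (he : ∀ x y : F, B x = y → A (e x) = e y) (x y : e.toLinearMap.range) (hxy : A x = y) :
    B (e.equivRange.symm x) = e.equivRange.symm y := by
  obtain ⟨u, rfl⟩ := e.equivRange.surjective x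
  obtain ⟨w, rfl⟩ := e.equivRange.surjective y
  rw [LinearIsometryEquiv.symm_apply_apply, LinearIsometryEquiv.symm_apply_apply]
  have hw : e ⟨B u, hB u u.2⟩ = e w := (he u _ rfl).symm.trans hxy
  exact congr(($(e.injective hw) : K))

end EquivRange

theorem stmt_7_general {𝕜 H K ι : Type*} [RCLike 𝕜]
    [NormedAddCommGroup H] [InnerProductSpace 𝕜 H] [CompleteSpace H]
    [NormedAddCommGroup K] [InnerProductSpace 𝕜 K] [CompleteSpace K]
    (π : ι → unitary (H →L[𝕜] H)) (ρ : ι → unitary (K →L[𝕜] K)) {T : K →L[𝕜] H}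
    (hT : IsCompactOperator T) (hT0 : T ≠ 0)
    (hint : ∀ i, (π i : H →L[𝕜] H) ∘L T = T ∘L (ρ i : K →L[𝕜] K)) :
    ∃ (E : Submodule 𝕜 H) (F : Submodule 𝕜 K),
      E ≠ ⊥ ∧ FiniteDimensional 𝕜 E ∧
      (∀ i, ∀ x ∈ E, (π i : H →L[𝕜] H) x ∈ E) ∧
      (∀ i, ∀ y ∈ F, (ρ i : K →L[𝕜] K) y ∈ F) ∧
      ∃ V : E ≃ₗᵢ[𝕜] F, ∀ (i : ι) (x y : E), (π i : H →L[𝕜] H) x = y →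
        (ρ i : K →L[𝕜] K) (V x) = V y := by
  obtain ⟨σ, hσ, hF⟩ := exists_pos_singularSubspace_ne_bot hT hT0
  have : FiniteDimensional 𝕜 (singularSubspace T σ) := finiteDimensional_singularSubspace hT hσ.ne'
  let e := singularIsometry T hσ
  have hinv (i : ι) : ∀ y ∈ singularSubspace T σ, (ρ i : K →L[𝕜] K) y ∈ singularSubspace T σ :=
    fun _ => unitary_apply_mem_singularSubspace (hint i)
  have he (i : ι) := singularIsometry_intertwines hσ (hint i)
  have hE : e.toLinearMap.range ≠ ⊥ := fun h => hF <| Submodule.subsingleton_iff_eq_bot.mp <|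
    have := Submodule.subsingleton_iff_eq_bot.mpr h
    e.equivRange.injective.subsingleton
  exact ⟨e.toLinearMap.range, singularSubspace T σ, hE, inferInstance,
    fun i _ => apply_mem_range_of_intertwines (hinv i) (he i), hinv,
    e.equivRange.symm, fun i => equivRange_symm_intertwines (hinv i) (he i)⟩

/-- If `T : K → H` is a nonzero Hilbert–Schmidt operator intertwining
unitary representations `ρ` (on `K`) and `π` (on `H`) of a group `G`, then `π` and `ρ`
have a common nonzero finite-dimensional subrepresentation: there are invariant
subspaces `E ⊆ H`, `F ⊆ K` (with `E ≠ 0` finite dimensional) and a surjective isometry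
`V : E → F` intertwining the restrictions. -/
theorem stmt_7
    {G : Type*} [Group G]
    {H : Type*} [NormedAddCommGroup H] [InnerProductSpace ℂ H] [CompleteSpace H]
    {K : Type*} [NormedAddCommGroup K] [InnerProductSpace ℂ K] [CompleteSpace K]
    (π : G →* unitary (H →L[ℂ] H)) (ρ : G →* unitary (K →L[ℂ] K))
    {κ : Type*} (b : HilbertBasis κ ℂ K)
    (T : K →L[ℂ] H)
    (hHS : Summable fun j : κ => ‖T (b j)‖ ^ 2)
    (hT0 : T ≠ 0)
    (hint : ∀ g : G, ((π g : H →L[ℂ] H)).comp T = T.comp ((ρ g : K →L[ℂ] K))) :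
    ∃ (E : Submodule ℂ H) (F : Submodule ℂ K),
      E ≠ ⊥ ∧ FiniteDimensional ℂ E ∧
      (∀ g : G, ∀ x ∈ E, (π g : H →L[ℂ] H) x ∈ E) ∧
      (∀ g : G, ∀ y ∈ F, (ρ g : K →L[ℂ] K) y ∈ F) ∧
      ∃ V : E ≃ₗᵢ[ℂ] F,
        ∀ (g : G) (x y : E), (π g : H →L[ℂ] H) (x : H) = (y : H) →
          (ρ g : K →L[ℂ] K) ((V x : K)) = ((V y : K)) :=
  stmt_7_general π ρ (isCompactOperator_of_summable_norm_sq b hHS) hT0 hint
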